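/- arXiv:math-ph/0511037 — 5 statements merged into one kernel-verified Lean document; each statement's English description precedes it below -/
import Mathlib

section
/- Let d ≥ 1 be an integer and let λ be a real number with λ > −d/2. Then the function k ↦ (1 − (1/d) Σ_{i=1}^{d} cos(2π k_i))^λ (real power) is Lebesgue-integrable on the cube [0,1]^d ⊂ ℝ^d. -/
open MeasureTheory Real

/-!
Only `l ≤ 0` is at stake, since otherwise the integrand is continuous. The base is the mean of the
`1 - cos (2πkᵢ)`, hence at least their geometric mean, so its `l`-th power is dominated by
`∏ᵢ (1 - cos (2πkᵢ)) ^ (l / d)`. By Fubini this product is integrable as soon as each factor is,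
and `1 - cos (2πx)` vanishes quadratically at the integers, so the condition on each factor is
`2 * (l / d) > -1`.
-/

section WeightedMean

variable {ι : Type*} [Fintype ι] {w : ι → ℝ} {l : ℝ}

lemma rpow_arith_mean_weighted_le_prod_rpow_of_nonpos {z : ι → ℝ} (hw : ∀ i, 0 ≤ w i)
    (hw₁ : ∑ i, w i = 1) (hz : ∀ i, 0 < z i) (hl : l ≤ 0) :
    (∑ i, w i * z i) ^ l ≤ ∏ i, z i ^ (w i * l) :=
  calc
    (∑ i, w i * z i) ^ l ≤ (∏ i, z i ^ w i) ^ l :=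
      rpow_le_rpow_of_nonpos (Finset.prod_pos fun i _ => rpow_pos_of_pos (hz i) _)
        (geom_mean_le_arith_mean_weighted _ w z (fun i _ => hw i) hw₁ fun i _ => (hz i).le) hl
    _ = ∏ i, (z i ^ w i) ^ l := (finsetProd_rpow _ _ (fun i _ => rpow_nonneg (hz i).le _) _).symm
    _ = ∏ i, z i ^ (w i * l) := Finset.prod_congr rfl fun i _ => (rpow_mul (hz i).le _ _).symm

theorem integrable_pi_rpow_arith_mean_weighted_of_nonpos {α : ι → Type*}
    [∀ i, MeasurableSpace (α i)] {μ : ∀ i, Measure (α i)} [∀ i, SigmaFinite (μ i)]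
    {f : ∀ i, α i → ℝ} (hw : ∀ i, 0 ≤ w i) (hw₁ : ∑ i, w i = 1) (hl : l ≤ 0)
    (hf : ∀ i, AEMeasurable (f i) (μ i)) (hf_pos : ∀ i, ∀ᵐ x ∂μ i, 0 < f i x)
    (hf_int : ∀ i, Integrable (fun x => f i x ^ (w i * l)) (μ i)) :
    Integrable (fun x => (∑ i, w i * f i (x i)) ^ l) (Measure.pi μ) := by
  have h_meas : AEMeasurable (fun x => (∑ i, w i * f i (x i)) ^ l) (Measure.pi μ) :=
    (Finset.aemeasurable_fun_sum _ fun i _ =>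
      ((hf i).comp_quasiMeasurePreserving
        (Measure.quasiMeasurePreserving_eval μ i)).const_mul (w i)).pow_const l
  have h_pos : ∀ᵐ x ∂Measure.pi μ, ∀ i, 0 < f i (x i) :=
    ae_all_iff.2 fun i => Measure.tendsto_eval_ae_ae.eventually (hf_pos i)
  refine (Integrable.fintype_prod_dep hf_int).mono' h_meas.aestronglyMeasurable ?_
  filter_upwards [h_pos] with x hx
  have h_mean : 0 ≤ ∑ i, w i * f i (x i) :=
    Finset.sum_nonneg fun i _ => mul_nonneg (hw i) (hx i).le
  rw [norm_of_nonneg (rpow_nonneg h_mean l)]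
  exact rpow_arith_mean_weighted_le_prod_rpow_of_nonpos hw hw₁ hx hl

end WeightedMean

section OneSubCos

variable {m : ℝ}

lemma one_sub_cos_rpow_le_of_nonpos (hm : m ≤ 0) {x : ℝ} (hx : 0 < x) (hxπ : x ≤ π) :
    (1 - cos x) ^ m ≤ (2 / π ^ 2) ^ m * x ^ (2 * m) := by
  have h_quadratic : 2 / π ^ 2 * x ^ 2 ≤ 1 - cos x := by
    linarith [cos_le_one_sub_mul_cos_sq (abs_le.2 ⟨by linarith, hxπ⟩)]
  calc
    (1 - cos x) ^ m ≤ (2 / π ^ 2 * x ^ 2) ^ m :=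
      rpow_le_rpow_of_nonpos (by positivity) h_quadratic hm
    _ = (2 / π ^ 2) ^ m * x ^ (2 * m) := by
      rw [mul_rpow (by positivity) (by positivity), rpow_mul hx.le, rpow_two]

lemma intervalIntegrable_one_sub_cos_rpow_zero_pi (hm : m ≤ 0) (hm' : -1 / 2 < m) :
    IntervalIntegrable (fun x => (1 - cos x) ^ m) volume 0 π := by
  have h_bound : IntervalIntegrable (fun x => (2 / π ^ 2) ^ m * x ^ (2 * m)) volume 0 π :=
    (intervalIntegral.intervalIntegrable_rpow' (by linarith)).const_mul _
  refine h_bound.mono_fun' (Measurable.aestronglyMeasurable (by fun_prop)) ?_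
  filter_upwards [ae_restrict_mem measurableSet_uIoc] with x hx
  rw [Set.uIoc_of_le pi_pos.le] at hx
  rw [norm_of_nonneg (rpow_nonneg (sub_nonneg.2 (cos_le_one x)) m)]
  exact one_sub_cos_rpow_le_of_nonpos hm hx.1 hx.2

theorem intervalIntegrable_one_sub_cos_rpow (hm : -1 / 2 < m) (a b : ℝ) :
    IntervalIntegrable (fun x => (1 - cos x) ^ m) volume a b := by
  rcases le_total 0 m with hm₀ | hm₀
  · exact (Continuous.rpow_const (by fun_prop) fun _ => Or.inr hm₀).intervalIntegrable a b
  have h_left := intervalIntegrable_one_sub_cos_rpow_zero_pi hm₀ hm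
  have h_right : IntervalIntegrable (fun x => (1 - cos x) ^ m) volume π (2 * π) := by
    simpa only [cos_two_pi_sub, sub_zero, show 2 * π - π = π by ring] using
      (h_left.comp_sub_left (2 * π)).symm
  have h_periodic : Function.Periodic (fun x => (1 - cos x) ^ m) (2 * π) := fun x => by
    simp only [cos_add_two_pi]
  exact h_periodic.intervalIntegrable₀ two_pi_pos.ne' (h_left.trans h_right) a b

lemma integrableOn_Icc_one_sub_cos_mul_rpow (hm : -1 / 2 < m) {c : ℝ} (hc : c ≠ 0) (a b : ℝ) :
    IntegrableOn (fun x => (1 - cos (c * x)) ^ m) (Set.Icc a b) := by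
  have h : IntervalIntegrable (fun x => (1 - cos (c * x)) ^ m) volume a b := by
    simpa [hc] using (intervalIntegrable_one_sub_cos_rpow hm (c * a) (c * b)).comp_mul_left (c := c)
  exact ((intervalIntegrable_iff' (by finiteness)).1 h).mono_set Set.Icc_subset_uIcc

lemma ae_cos_mul_lt_one {c : ℝ} (hc : c ≠ 0) : ∀ᵐ x : ℝ, cos (c * x) < 1 := by
  have h_countable : {x : ℝ | cos x = 1}.Countable :=
    (Set.countable_range fun n : ℤ => n * (2 * π)).mono fun x hx => (cos_eq_one_iff x).1 hx
  filter_upwards [(h_countable.preimage_of_injOn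
    (mul_right_injective₀ hc).injOn).ae_notMem volume] with x hx
  exact (cos_le_one _).lt_of_ne hx

end OneSubCos

lemma one_sub_mean_eq_mean_one_sub {ι : Type*} [Fintype ι] [Nonempty ι] (z : ι → ℝ) :
    1 - 1 / (Fintype.card ι : ℝ) * ∑ i, z i = ∑ i, 1 / (Fintype.card ι : ℝ) * (1 - z i) := by
  simp [← Finset.mul_sum, mul_sub]

theorem critical_lattice_dispersion_integrable_general {ι : Type*} [Fintype ι] [Nonempty ι]
    {l : ℝ} (hl : -(Fintype.card ι : ℝ) / 2 < l) (a b : ι → ℝ) :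
    IntegrableOn
      (fun k : ι → ℝ => (1 - 1 / (Fintype.card ι : ℝ) * ∑ i, cos (2 * π * k i)) ^ l)
      (Set.Icc a b) := by
  have h_card : (0 : ℝ) < Fintype.card ι := by exact_mod_cast Fintype.card_pos
  rcases le_total 0 l with hl₀ | hl₀
  · exact (Continuous.rpow_const (by fun_prop) fun _ => Or.inr hl₀).integrableOn_Icc
  have h_exponent : -1 / 2 < 1 / (Fintype.card ι : ℝ) * l := by
    rw [one_div_mul_eq_div, lt_div_iff₀ h_card]
    linarith
  simp only [one_sub_mean_eq_mean_one_sub]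
  rw [IntegrableOn, ← Set.pi_univ_Icc, volume_pi, Measure.restrict_pi_pi]
  exact integrable_pi_rpow_arith_mean_weighted_of_nonpos
    (f := fun _ x => 1 - cos (2 * π * x))
    (fun _ => by positivity) (by simp) hl₀ (fun _ => by fun_prop)
    (fun _ => ae_restrict_of_ae ((ae_cos_mul_lt_one two_pi_pos.ne').mono fun _ => sub_pos.2))
    (fun i => integrableOn_Icc_one_sub_cos_mul_rpow h_exponent two_pi_pos.ne' (a i) (b i))

/-- For `d ≥ 1` and `λ > −d/2`, the dispersion-relation power
`k ↦ (1 − (1/d) Σᵢ cos(2π kᵢ))^λ` is Lebesgue-integrable on the cube `[0,1]^d`. -/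
theorem critical_lattice_dispersion_integrable
    (d : ℕ) (hd : 1 ≤ d) (l : ℝ) (hl : l > -(d : ℝ)/2) :
    IntegrableOn
      (fun k : Fin d → ℝ =>
        (1 - (1/(d : ℝ)) * ∑ i : Fin d, Real.cos (2 * Real.pi * k i)) ^ l)
      (Set.Icc (0 : Fin d → ℝ) 1) volume := by
  have : Nonempty (Fin d) := Fin.pos_iff_nonempty.1 hd
  simpa using critical_lattice_dispersion_integrable_general (ι := Fin d) (by simpa using hl) 0 1
end

section
/- Let n ≥ 1 and let Ω be a real symmetric positive-definite n×n matrix. On ℝⁿ × ℝⁿ with symplectic form s((q,p),(q',p')) = q·p' − q'·p, let A₀(q,p) = (p, −Ω² q) be the Hamiltonian vector field of H(q,p) = (1/2)(p·p + q·Ω² q), and let J(q,p) = (−Ω⁻¹ p, Ω q). Suppose J' : ℝⁿ × ℝⁿ → ℝⁿ × ℝⁿ is a linear map satisfying: J' ∘ J' = −identity; s(J' X, J' Y) = s(X, Y) for all X, Y; s(X, J' X) > 0 for all X ≠ 0; and J' ∘ A₀ = A₀ ∘ J' (so that the Hamiltonian flow is unitary for the complex Hilbert-space structure determined by J'). Then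 J' = J. -/
open Matrix

/-!
The structure `J_Ω (q, p) = (-Ω⁻¹ p, Ω q)` is itself positive, and it is a polynomial in `A₀`:
since `x ↦ x²` is injective on the spectrum of the positive definite matrix `Ω`, the inverse `Ω⁻¹`
is a polynomial in `Ω²`, hence `Ω⁻¹ ⊕ Ω⁻¹` is a polynomial in `A₀² = -(Ω² ⊕ Ω²)`, and
`J_Ω = -(Ω⁻¹ ⊕ Ω⁻¹) A₀`. So any `J'` commuting with `A₀` commutes with `J_Ω`. For two commuting
complex structures `(J' + J_Ω)(J' - J_Ω) = 0`, so `J' = -J_Ω` on the range of `J' - J_Ω`; as both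
structures are positive, that range is zero.
-/

section TameComplexStructure

variable {R V : Type*} [CommRing R] [PartialOrder R] [AddCommGroup V] [Module R V]

/-- A complex structure tamed by the bilinear form `B`, in the sense of symplectic geometry:
`J² = -1` and `B v (J v) > 0` for `v ≠ 0`, without invariance of `B` under `J`. -/
structure IsTameComplexStructure (B : LinearMap.BilinForm R V) (J : Module.End R V) : Prop where
  mul_self : J * J = -1
  pos : ∀ v, v ≠ 0 → 0 < B v (J v)

theorem IsTameComplexStructure.eq_of_commute [IsOrderedAddMonoid R] {B : LinearMap.BilinForm R V}
    {J K : Module.End R V} (hJ : IsTameComplexStructure B J) (hK : IsTameComplexStructure B K)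
    (hJK : Commute J K) : J = K := by
  have hprod : (J + K) * (J - K) = 0 := by
    rw [← hJK.mul_self_sub_mul_self_eq, hJ.mul_self, hK.mul_self, sub_self]
  ext v
  rw [← sub_eq_zero, ← LinearMap.sub_apply]
  set w := (J - K) v
  by_contra hw
  have hneg : J w = -K w := eq_neg_of_add_eq_zero_left (LinearMap.congr_fun hprod v)
  have hpos : 0 < -B w (K w) := by simpa only [hneg, map_neg] using hJ.pos w hw
  exact lt_asymm (hK.pos w hw) (neg_pos.mp hpos)

end TameComplexStructure

section FunctionalCalculus

open Polynomial

theorem cfc_mem_adjoin_aeval {R A : Type*} {p : A → Prop} [Field R] [StarRing R] [MetricSpace R]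
    [IsTopologicalRing R] [ContinuousStar R] [TopologicalSpace A] [Ring A] [StarRing A]
    [Algebra R A] [ContinuousFunctionalCalculus R A p] {a : A} {q : R[X]} (ha : p a)
    (hfin : (spectrum R a).Finite) (hq : Set.InjOn q.eval (spectrum R a)) (f : R → R) :
    cfc f a ∈ Algebra.adjoin R {aeval a q} := by
  classical
  let g : R[X] := Lagrange.interpolate hfin.toFinset q.eval f
  have hg : (spectrum R a).EqOn f (g.comp q).eval := fun x hx ↦ by
    have hgx : g.eval (q.eval x) = f x := Lagrange.eval_interpolate_at_node f
      (by simpa only [hfin.coe_toFinset] using hq) (hfin.mem_toFinset.mpr hx)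
    exact (eval_comp.trans hgx).symm
  rw [cfc_congr hg, cfc_polynomial _ a ha, aeval_comp]
  exact aeval_mem_adjoin_singleton R _

open scoped ComplexOrder in
theorem inv_mem_adjoin_mul_self_of_posDef {ι 𝕜 : Type*} [Fintype ι] [DecidableEq ι] [RCLike 𝕜]
    {M : Matrix ι ι 𝕜} (hM : M.PosDef) : M⁻¹ ∈ Algebra.adjoin ℝ {M * M} := by
  have hspec_pos : ∀ x ∈ spectrum ℝ M, 0 < x := by
    rw [hM.isHermitian.spectrum_real_eq_range_eigenvalues]
    exact Set.forall_mem_range.mpr hM.eigenvalues_pos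
  have hsq_inj : Set.InjOn (X ^ 2 : ℝ[X]).eval (spectrum ℝ M) := fun x hx y hy hxy ↦
    (pow_left_inj₀ (hspec_pos x hx).le (hspec_pos y hy).le two_ne_zero).mp (by simpa using hxy)
  have hcfc_inv : cfc (fun x : ℝ ↦ x⁻¹) M = M⁻¹ := by
    simpa using cfc_inv_id (R := ℝ) hM.isUnit.unit hM.isHermitian.isSelfAdjoint
  simpa [hcfc_inv, sq] using cfc_mem_adjoin_aeval hM.isHermitian.isSelfAdjoint
    M.finite_real_spectrum hsq_inj (·⁻¹)

end FunctionalCalculus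

section HarmonicOscillator

variable {ι R : Type*} [Fintype ι] [CommRing R]

variable (ι R) in
/-- The symplectic form `s((q, p), (q', p')) = q · p' - q' · p` on phase space. -/
def phaseForm : LinearMap.BilinForm R ((ι → R) × (ι → R)) :=
  let qp := (dotProductBilin R R).compl₁₂ (LinearMap.fst R (ι → R) (ι → R)) (LinearMap.snd R _ _)
  qp - qp.flip

theorem phaseForm_apply (X Y : (ι → R) × (ι → R)) :
    phaseForm ι R X Y = X.1 ⬝ᵥ Y.2 - Y.1 ⬝ᵥ X.2 := rfl

/-- The Hamiltonian vector field `A₀ (q, p) = (p, -Ω² q)` of the system `q̈ = -Ω² q`. -/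
def oscillatorField (Ω : Matrix ι ι R) : Module.End R ((ι → R) × (ι → R)) :=
  (LinearMap.snd R _ _).prod (-((Ω * Ω).mulVecLin ∘ₗ LinearMap.fst R _ _))

theorem oscillatorField_apply (Ω : Matrix ι ι R) (X : (ι → R) × (ι → R)) :
    oscillatorField Ω X = (X.2, -((Ω * Ω) *ᵥ X.1)) := rfl

variable [DecidableEq ι]

/-- The complex structure `J_Ω (q, p) = (-Ω⁻¹ p, Ω q)`; `Ω⁻¹` is `0` when `Ω` is singular. -/
noncomputable def oscillatorComplexStructure (Ω : Matrix ι ι R) :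
    Module.End R ((ι → R) × (ι → R)) :=
  (-(Ω⁻¹.mulVecLin ∘ₗ LinearMap.snd R _ _)).prod (Ω.mulVecLin ∘ₗ LinearMap.fst R _ _)

theorem oscillatorComplexStructure_apply (Ω : Matrix ι ι R) (X : (ι → R) × (ι → R)) :
    oscillatorComplexStructure Ω X = (-(Ω⁻¹ *ᵥ X.2), Ω *ᵥ X.1) := rfl

variable (ι R) in
/-- The diagonal action `M ↦ M ⊕ M` of matrices on phase space. -/
def phaseDiagonal : Matrix ι ι R →ₐ[R] Module.End R ((ι → R) × (ι → R)) :=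
  (LinearMap.prodMapAlgHom R (ι → R) (ι → R)).comp
    ((toLinAlgEquiv' : Matrix ι ι R ≃ₐ[R] _).toAlgHom.prod toLinAlgEquiv'.toAlgHom)

theorem phaseDiagonal_apply (M : Matrix ι ι R) (X : (ι → R) × (ι → R)) :
    phaseDiagonal ι R M X = (M *ᵥ X.1, M *ᵥ X.2) := rfl

theorem oscillatorField_mul_self (Ω : Matrix ι ι R) :
    oscillatorField Ω * oscillatorField Ω = -phaseDiagonal ι R (Ω * Ω) := by
  refine LinearMap.ext fun X ↦ ?_
  simp [oscillatorField_apply, phaseDiagonal_apply]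

theorem oscillatorComplexStructure_eq_neg_mul {Ω : Matrix ι ι R} (hΩ : IsUnit Ω) :
    oscillatorComplexStructure Ω = -(phaseDiagonal ι R Ω⁻¹ * oscillatorField Ω) := by
  have hdet := Ω.isUnit_iff_isUnit_det.mp hΩ
  refine LinearMap.ext fun X ↦ ?_
  simp [oscillatorComplexStructure_apply, oscillatorField_apply, phaseDiagonal_apply, mulVec_neg,
    nonsing_inv_mul_cancel_left _ _ hdet]

theorem oscillatorComplexStructure_mul_self {Ω : Matrix ι ι R} (hΩ : IsUnit Ω) :
    oscillatorComplexStructure Ω * oscillatorComplexStructure Ω = -1 := by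
  have hdet := Ω.isUnit_iff_isUnit_det.mp hΩ
  refine LinearMap.ext fun ⟨q, p⟩ ↦ ?_
  simp [oscillatorComplexStructure_apply, mulVec_neg, nonsing_inv_mul _ hdet,
    mul_nonsing_inv _ hdet]

theorem phaseForm_oscillatorComplexStructure_self (Ω : Matrix ι ι R) (X : (ι → R) × (ι → R)) :
    phaseForm ι R X (oscillatorComplexStructure Ω X) =
      X.1 ⬝ᵥ (Ω *ᵥ X.1) + X.2 ⬝ᵥ (Ω⁻¹ *ᵥ X.2) := by
  simp [phaseForm_apply, oscillatorComplexStructure_apply, dotProduct_comm _ X.2]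

theorem isTameComplexStructure_oscillatorComplexStructure {Ω : Matrix ι ι ℝ} (hΩ : Ω.PosDef) :
    IsTameComplexStructure (phaseForm ι ℝ) (oscillatorComplexStructure Ω) where
  mul_self := oscillatorComplexStructure_mul_self hΩ.isUnit
  pos X hX := by
    rw [phaseForm_oscillatorComplexStructure_self]
    have hq_nonneg : 0 ≤ X.1 ⬝ᵥ (Ω *ᵥ X.1) := hΩ.posSemidef.dotProduct_mulVec_nonneg X.1
    have hp_nonneg : 0 ≤ X.2 ⬝ᵥ (Ω⁻¹ *ᵥ X.2) := hΩ.inv.posSemidef.dotProduct_mulVec_nonneg X.2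
    by_cases hq : X.1 = 0
    · have hp : X.2 ≠ 0 := fun hp ↦ hX (Prod.ext hq hp)
      exact add_pos_of_nonneg_of_pos hq_nonneg (hΩ.inv.dotProduct_mulVec_pos hp)
    · exact add_pos_of_pos_of_nonneg (hΩ.dotProduct_mulVec_pos hq) hp_nonneg

theorem oscillatorComplexStructure_mem_adjoin_oscillatorField {Ω : Matrix ι ι ℝ}
    (hΩ : Ω.PosDef) : oscillatorComplexStructure Ω ∈ Algebra.adjoin ℝ {oscillatorField Ω} := by
  have hfield := Algebra.self_mem_adjoin_singleton ℝ (oscillatorField Ω)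
  have hsq : phaseDiagonal ι ℝ (Ω * Ω) ∈ Algebra.adjoin ℝ {oscillatorField Ω} := by
    rw [← neg_neg (phaseDiagonal ι ℝ (Ω * Ω)), ← oscillatorField_mul_self]
    exact neg_mem (mul_mem hfield hfield)
  have hinv : phaseDiagonal ι ℝ Ω⁻¹ ∈ Algebra.adjoin ℝ {phaseDiagonal ι ℝ (Ω * Ω)} := by
    rw [← AlgHom.map_adjoin_singleton]
    exact Subalgebra.mem_map.mpr ⟨Ω⁻¹, inv_mem_adjoin_mul_self_of_posDef hΩ, rfl⟩
  rw [oscillatorComplexStructure_eq_neg_mul hΩ.isUnit]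
  exact neg_mem (mul_mem (Algebra.adjoin_singleton_le hsq hinv) hfield)

theorem complex_structure_unique_general {Ω : Matrix ι ι ℝ} (hΩ : Ω.PosDef)
    {J : Module.End ℝ ((ι → ℝ) × (ι → ℝ))} (hJ : IsTameComplexStructure (phaseForm ι ℝ) J)
    (hJ_comm : Commute J (oscillatorField Ω)) : J = oscillatorComplexStructure Ω :=
  hJ.eq_of_commute (isTameComplexStructure_oscillatorComplexStructure hΩ)
    (Algebra.commute_of_mem_adjoin_singleton_of_commute
      (oscillatorComplexStructure_mem_adjoin_oscillatorField hΩ) hJ_comm)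

end HarmonicOscillator

/-- Uniqueness of the flow-invariant `s`-compatible positive complex structure:
if `J'` is a linear map on `ℝⁿ × ℝⁿ` with `J'² = −1`, `s(J'X,J'Y) = s(X,Y)`,
`s(X,J'X) > 0` for `X ≠ 0`, and `J'` commutes with the Hamiltonian vector field
`A₀(q,p) = (p, −Ω²q)`, then `J'(q,p) = (−Ω⁻¹p, Ωq)`. -/
theorem complex_structure_unique
    (n : ℕ) (hn : 1 ≤ n) (Ω : Matrix (Fin n) (Fin n) ℝ)
    (hsymm : Ω.IsSymm) (hpos : Ω.PosDef)
    (s : ((Fin n → ℝ) × (Fin n → ℝ)) → ((Fin n → ℝ) × (Fin n → ℝ)) → ℝ)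
    (hs : ∀ X Y, s X Y = X.1 ⬝ᵥ Y.2 - Y.1 ⬝ᵥ X.2)
    (A₀ : ((Fin n → ℝ) × (Fin n → ℝ)) →ₗ[ℝ] ((Fin n → ℝ) × (Fin n → ℝ)))
    (hA₀ : ∀ X, A₀ X = (X.2, -((Ω * Ω) *ᵥ X.1)))
    (J' : ((Fin n → ℝ) × (Fin n → ℝ)) →ₗ[ℝ] ((Fin n → ℝ) × (Fin n → ℝ)))
    (hJ'sq : ∀ X, J' (J' X) = -X)
    (hJ'compat : ∀ X Y, s (J' X) (J' Y) = s X Y)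
    (hJ'pos : ∀ X, X ≠ 0 → 0 < s X (J' X))
    (hJ'comm : ∀ X, J' (A₀ X) = A₀ (J' X)) :
    ∀ X, J' X = (-(Ω⁻¹ *ᵥ X.2), Ω *ᵥ X.1) := by
  obtain rfl : A₀ = oscillatorField Ω := LinearMap.ext hA₀
  have hJ' : IsTameComplexStructure (phaseForm (Fin n) ℝ) J' :=
    ⟨LinearMap.ext hJ'sq, fun X hX ↦ (hJ'pos X hX).trans_eq (hs X (J' X))⟩
  exact LinearMap.congr_fun (complex_structure_unique_general hpos hJ' (LinearMap.ext hJ'comm))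
end

section
/- Let n ≥ 1, let Ω be a real symmetric positive-definite n×n matrix, and let ψ₀(x) = exp(−(x·Ωx)/2) on ℝⁿ. Then for all a, b ∈ ℝⁿ, ∫_{ℝⁿ} ψ₀(x) · exp(i(b·x − (a·b)/2)) · ψ₀(x − a) dx = (∫_{ℝⁿ} ψ₀(x)² dx) · exp(−(1/4)(a·Ωa + b·Ω⁻¹b)); that is, the vacuum expectation value of the Weyl operator W(a,b) equals exp(−(1/2)‖z_Ω(a,b)‖²). -/
open Matrix MeasureTheory

/-!
Centring the integrand at the midpoint `a / 2` of the displacement cancels the phase `a·b/2` and,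
by the parallelogram identity, decouples `a` from the integration variable: what remains is
`exp (-a·Ωa/4)` times the Fourier integral of `ψ₀²` at frequency `b`. The substitution
`y = Ω^{1/2} x` reduces the latter to the standard Gaussian.
-/

section LinearChangeOfVariables

variable {E F : Type*} [NormedAddCommGroup E] [NormedSpace ℝ E] [FiniteDimensional ℝ E]
  [MeasurableSpace E] [BorelSpace E] [NormedAddCommGroup F] [NormedSpace ℝ F]

lemma integral_comp_linearMap (μ : Measure E) [μ.IsAddHaarMeasure] {L : E →ₗ[ℝ] E}
    (hL : LinearMap.det L ≠ 0) (f : E → F) :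
    ∫ x, f (L x) ∂μ = |(LinearMap.det L)⁻¹| • ∫ y, f y ∂μ := by
  let e : E ≃ᵐ E := (L.equivOfDetNeZero hL).toContinuousLinearEquiv.toHomeomorph.toMeasurableEquiv
  calc
    ∫ x, f (L x) ∂μ = ∫ y, f y ∂μ.map L := (integral_map_equiv e f).symm
    _ = |(LinearMap.det L)⁻¹| • ∫ y, f y ∂μ := by
      rw [Measure.map_linearMap_addHaar_eq_smul_addHaar μ hL, integral_smul_measure,
        ENNReal.toReal_ofReal (abs_nonneg _)]

end LinearChangeOfVariables

section QuadraticForms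

variable {ι R : Type*} [Fintype ι]

lemma dotProduct_mulVec_parallelogram [NonUnitalNonAssocRing R] (A : Matrix ι ι R) (u v : ι → R) :
    (u + v) ⬝ᵥ (A *ᵥ (u + v)) + (u - v) ⬝ᵥ (A *ᵥ (u - v)) =
      2 • (u ⬝ᵥ (A *ᵥ u) + v ⬝ᵥ (A *ᵥ v)) := by
  simp only [mulVec_add, mulVec_sub, dotProduct_add, dotProduct_sub, add_dotProduct,
    sub_dotProduct]
  abel

lemma dotProduct_transpose_mul_mulVec {m κ : Type*} [Fintype m] [Fintype κ]
    [NonUnitalCommSemiring R] (A : Matrix m ι R) (B : Matrix m κ R) (x : ι → R) (y : κ → R) :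
    x ⬝ᵥ ((Aᵀ * B) *ᵥ y) = (A *ᵥ x) ⬝ᵥ (B *ᵥ y) := by
  rw [← mulVec_mulVec, dotProduct_mulVec, vecMul_transpose]

open scoped MatrixOrder in
lemma exists_isSymm_sqrt_of_posSemidef [DecidableEq ι] {A : Matrix ι ι ℝ} (hA : A.PosSemidef) :
    ∃ S : Matrix ι ι ℝ, S.IsSymm ∧ S * S = A ∧ S.det = √A.det := by
  refine ⟨CFC.sqrt A, ?_, CFC.sqrt_mul_sqrt_self A hA.nonneg, ?_⟩
  · rw [IsSymm, ← conjTranspose_eq_transpose_of_trivial]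
    exact (CFC.sqrt_nonneg A).posSemidef.isHermitian
  · simpa using hA.det_sqrt

end QuadraticForms

section GaussianIntegrals

variable {ι : Type*} [Fintype ι] {β : ℂ}

lemma integral_cexp_neg_mul_dotProduct_self_add (hβ : 0 < β.re) (z : ℂ) (b : ι → ℝ) :
    ∫ x : ι → ℝ, Complex.exp (-β * (x ⬝ᵥ x : ℝ) + z * (b ⬝ᵥ x : ℝ)) =
      (Real.pi / β) ^ (Fintype.card ι / 2 : ℂ) *
        Complex.exp (z ^ 2 * (b ⬝ᵥ b : ℝ) / (4 * β)) := by
  simpa [dotProduct, Finset.mul_sum, mul_assoc, mul_pow, ← sq] using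
    GaussianFourier.integral_cexp_neg_mul_sum_add hβ fun i ↦ z * b i

lemma integral_cexp_neg_mul_dotProduct_mulVec_add [DecidableEq ι] {A : Matrix ι ι ℝ}
    (hA : A.PosDef) (hβ : 0 < β.re) (z : ℂ) (b : ι → ℝ) :
    ∫ x : ι → ℝ, Complex.exp (-β * (x ⬝ᵥ (A *ᵥ x) : ℝ) + z * (b ⬝ᵥ x : ℝ)) =
      (√A.det)⁻¹ * (Real.pi / β) ^ (Fintype.card ι / 2 : ℂ) *
        Complex.exp (z ^ 2 * (b ⬝ᵥ (A⁻¹ *ᵥ b) : ℝ) / (4 * β)) := by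
  obtain ⟨S, hS, hSA, hSdet⟩ := exists_isSymm_sqrt_of_posSemidef hA.posSemidef
  have hdet : S.det ≠ 0 := hSdet ▸ (Real.sqrt_pos.mpr hA.det_pos).ne'
  have hquad (x : ι → ℝ) : x ⬝ᵥ (A *ᵥ x) = (S *ᵥ x) ⬝ᵥ (S *ᵥ x) := by
    rw [← dotProduct_transpose_mul_mulVec, hS.eq, hSA]
  have hlin (x : ι → ℝ) : b ⬝ᵥ x = (S⁻¹ *ᵥ b) ⬝ᵥ (S *ᵥ x) := by
    rw [← dotProduct_transpose_mul_mulVec, hS.inv.eq, nonsing_inv_mul _ hdet.isUnit, one_mulVec]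
  have hinv : b ⬝ᵥ (A⁻¹ *ᵥ b) = (S⁻¹ *ᵥ b) ⬝ᵥ (S⁻¹ *ᵥ b) := by
    rw [← dotProduct_transpose_mul_mulVec, hS.inv.eq, ← Matrix.mul_inv_rev, hSA]
  have hsubst := integral_comp_linearMap volume (L := toLin' S) (by rwa [LinearMap.det_toLin'])
    fun y ↦ Complex.exp (-β * (y ⬝ᵥ y : ℝ) + z * ((S⁻¹ *ᵥ b) ⬝ᵥ y : ℝ))
  simp only [toLin'_apply, LinearMap.det_toLin', hSdet, ← hlin, ← hquad] at hsubst
  rw [hsubst, integral_cexp_neg_mul_dotProduct_self_add hβ, ← hinv,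
    abs_of_nonneg (by positivity), Complex.real_smul, Complex.ofReal_inv, mul_assoc]

end GaussianIntegrals

section WeylOperator

variable {ι : Type*} [Fintype ι]

/-- The unnormalized vacuum `ψ₀(x) = exp (-x·Ωx/2)`. -/
noncomputable def gaussianVacuum (Ω : Matrix ι ι ℝ) (x : ι → ℝ) : ℝ :=
  Real.exp (-(x ⬝ᵥ (Ω *ᵥ x)) / 2)

/-- The Weyl operator `V(a, b) = exp (-i (a·P - b·Q))` in the Schrödinger representation, acting
pointwise on arbitrary wave functions. -/
noncomputable def weylOperator (a b : ι → ℝ) (ψ : (ι → ℝ) → ℂ) (x : ι → ℝ) : ℂ :=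
  Complex.exp (Complex.I * ((b ⬝ᵥ x - (a ⬝ᵥ b) / 2 : ℝ) : ℂ)) * ψ (x - a)

lemma gaussianVacuum_sq (Ω : Matrix ι ι ℝ) (x : ι → ℝ) :
    gaussianVacuum Ω x ^ 2 = Real.exp (-(x ⬝ᵥ (Ω *ᵥ x))) := by
  rw [gaussianVacuum, ← Real.exp_nat_mul, Nat.cast_ofNat, mul_div_cancel₀ _ two_ne_zero]

lemma gaussianVacuum_add_mul_gaussianVacuum_sub (Ω : Matrix ι ι ℝ) (u v : ι → ℝ) :
    gaussianVacuum Ω (u + v) * gaussianVacuum Ω (u - v) =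
      gaussianVacuum Ω u ^ 2 * gaussianVacuum Ω v ^ 2 := by
  have hquad := dotProduct_mulVec_parallelogram Ω u v
  rw [gaussianVacuum_sq, gaussianVacuum_sq, gaussianVacuum, gaussianVacuum, ← Real.exp_add,
    ← Real.exp_add]
  congr 1
  linear_combination (-1 / 2 : ℝ) * hquad

lemma weylOperator_apply_add_half (a b : ι → ℝ) (ψ : (ι → ℝ) → ℂ) (y : ι → ℝ) :
    weylOperator a b ψ (y + (1 / 2 : ℝ) • a) =
      Complex.exp (Complex.I * (b ⬝ᵥ y : ℝ)) * ψ (y - (1 / 2 : ℝ) • a) := by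
  have hphase : b ⬝ᵥ (y + (1 / 2 : ℝ) • a) - (a ⬝ᵥ b) / 2 = b ⬝ᵥ y := by
    rw [dotProduct_add, dotProduct_smul, dotProduct_comm b a, smul_eq_mul]
    ring
  have hshift : y + (1 / 2 : ℝ) • a - a = y - (1 / 2 : ℝ) • a := by module
  rw [weylOperator, hphase, hshift]

lemma integral_gaussianVacuum_sq_mul_cexp [DecidableEq ι] {Ω : Matrix ι ι ℝ} (hΩ : Ω.PosDef)
    (z : ℂ) (b : ι → ℝ) :
    ∫ x, ((gaussianVacuum Ω x ^ 2 : ℝ) : ℂ) * Complex.exp (z * (b ⬝ᵥ x : ℝ)) =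
      (∫ x, gaussianVacuum Ω x ^ 2 : ℝ) *
        Complex.exp (z ^ 2 * (b ⬝ᵥ (Ω⁻¹ *ᵥ b) : ℝ) / 4) := by
  have hlaplace (w : ℂ) :
      ∫ x, ((gaussianVacuum Ω x ^ 2 : ℝ) : ℂ) * Complex.exp (w * (b ⬝ᵥ x : ℝ)) =
        (√Ω.det)⁻¹ * Real.pi ^ (Fintype.card ι / 2 : ℂ) *
          Complex.exp (w ^ 2 * (b ⬝ᵥ (Ω⁻¹ *ᵥ b) : ℝ) / 4) := by
    simpa [gaussianVacuum_sq, Complex.exp_add] using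
      integral_cexp_neg_mul_dotProduct_mulVec_add hΩ (β := 1) (by simp) w b
  have hnorm : ((∫ x, gaussianVacuum Ω x ^ 2 : ℝ) : ℂ) =
      (√Ω.det)⁻¹ * Real.pi ^ (Fintype.card ι / 2 : ℂ) := by
    rw [← integral_complex_ofReal]
    simpa using hlaplace 0
  rw [hlaplace z, hnorm]

theorem gaussian_weyl_expectation_general [DecidableEq ι] {Ω : Matrix ι ι ℝ} (hΩ : Ω.PosDef)
    (a b : ι → ℝ) :
    ∫ x, (gaussianVacuum Ω x : ℂ) * weylOperator a b (fun y ↦ (gaussianVacuum Ω y : ℂ)) x =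
      (∫ x, gaussianVacuum Ω x ^ 2 : ℝ) *
        Complex.exp (-(1 / 4 : ℂ) * ((a ⬝ᵥ (Ω *ᵥ a) + b ⬝ᵥ (Ω⁻¹ *ᵥ b) : ℝ) : ℂ)) := by
  have hintegrand (y : ι → ℝ) :
      (gaussianVacuum Ω (y + (1 / 2 : ℝ) • a) : ℂ) *
          weylOperator a b (fun y ↦ (gaussianVacuum Ω y : ℂ)) (y + (1 / 2 : ℝ) • a) =
        ((gaussianVacuum Ω y ^ 2 : ℝ) : ℂ) * Complex.exp (Complex.I * (b ⬝ᵥ y : ℝ)) *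
          ((gaussianVacuum Ω ((1 / 2 : ℝ) • a) ^ 2 : ℝ) : ℂ) := by
    rw [weylOperator_apply_add_half, mul_left_comm, ← Complex.ofReal_mul,
      gaussianVacuum_add_mul_gaussianVacuum_sub, Complex.ofReal_mul]
    ring
  rw [← integral_add_right_eq_self _ ((1 / 2 : ℝ) • a)]
  simp_rw [hintegrand]
  rw [integral_mul_const, integral_gaussianVacuum_sq_mul_cexp hΩ, gaussianVacuum_sq,
    Complex.ofReal_exp, mul_assoc, ← Complex.exp_add]
  simp only [mulVec_smul, dotProduct_smul, smul_dotProduct, smul_eq_mul, Complex.I_sq]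
  congr 2
  push_cast
  ring

end WeylOperator

/-- The vacuum expectation value of the Weyl operator `W(a,b)`, acting by
`(Wψ)(x) = e^{i(b·x − a·b/2)} ψ(x−a)`, in the Gaussian state
`ψ₀(x) = exp(−x·Ωx/2)` equals `(∫ψ₀²) · exp(−¼(a·Ωa + b·Ω⁻¹b))`. -/
theorem gaussian_weyl_expectation
    (n : ℕ) (hn : 1 ≤ n) (Ω : Matrix (Fin n) (Fin n) ℝ)
    (hΩsymm : Ω.IsSymm) (hΩpos : Ω.PosDef)
    (ψ₀ : (Fin n → ℝ) → ℝ)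
    (hψ₀ : ∀ x, ψ₀ x = Real.exp (-(x ⬝ᵥ (Ω *ᵥ x)) / 2))
    (a b : Fin n → ℝ) :
    ∫ x : Fin n → ℝ,
        (ψ₀ x : ℂ) * Complex.exp (Complex.I * ((b ⬝ᵥ x - (a ⬝ᵥ b) / 2 : ℝ) : ℂ))
          * (ψ₀ (x - a) : ℂ)
      = ((∫ x : Fin n → ℝ, (ψ₀ x)^2 : ℝ) : ℂ) *
          Complex.exp (-(1/4 : ℂ) *
            ((a ⬝ᵥ (Ω *ᵥ a) + b ⬝ᵥ (Ω⁻¹ *ᵥ b) : ℝ) : ℂ)) := by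
  obtain rfl : ψ₀ = gaussianVacuum Ω := funext hψ₀
  simpa only [weylOperator, mul_assoc] using gaussian_weyl_expectation_general hΩpos a b
end

section
/- Let Ω be a real symmetric positive-definite 2×2 matrix whose off-diagonal entry satisfies Ω₁₂ ≠ 0, and let ψ₀(x) = exp(−(x·Ωx)/2) on ℝ². Let P be a polynomial in two variables with complex coefficients and set ψ(x₁,x₂) = P(x₁,x₂)·ψ₀(x₁,x₂). Suppose that ψ is indistinguishable from ψ₀ by all Weyl operators localized on the second oscillator, i.e. for all a, b ∈ ℝ: ∫_{ℝ²} conj(ψ(x₁,x₂)) e^{i(b x₂ − a b/2)} ψ(x₁, x₂ − a) dx = ∫_{ℝ²} ψ₀(x₁,x₂) e^{i(b x₂ − a b/2)} ψ₀(x₁, x₂ − a) dx. Then P is a constant polynomial, i.e. ψ is a scalar multiple of the ground state ψ₀. (Equivalently: if the coupling Ω₁₂ is nonzero, no state with a finite nonzero number of quanta is a strictly local excitation of the vacuum supported on site 1.) -/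
open Matrix MeasureTheory

open Polynomial FourierTransform

/-!
Write `x₂ = w + a / 2`, so that the displaced second coordinate is `w - a / 2`, and `x₁ = u - κ w`
with `κ = Ω₁₂ / Ω₁₁`. Completing the square turns the product of the two displaced Gaussians into
`exp (-A u²) exp (-δ w²)` with `A = Ω₁₁` and `δ = det Ω / Ω₁₁`, so the Weyl expectation becomes a
Fourier transform in `w`, and its injectivity shows that
`∫ conj P(u - κ w, w + a / 2) P(u - κ w, w - a / 2) exp (-A u²) du` does not depend on `w` or `a`.
With `x = w + a / 2` and `y = w - a / 2` this is a polynomial in `x, y`, whose part of degree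
`2 deg P` is, up to a nonzero factor, the leading form of `conj P` at `(-κ (x + y) / 2, x)` times
the leading form of `P` at `(-κ (x + y) / 2, y)`. For `κ ≠ 0` both linear substitutions are
invertible, so the product is nonzero, which is impossible for a constant unless `deg P = 0`.
-/

section Polynomials

variable {σ τ R S : Type*}

lemma coeff_prod_sum_of_natDegree_le {ι : Type*} [CommSemiring R] {f : ι → R[X]} {n : ι → ℕ}
    (s : Finset ι) (hf : ∀ i ∈ s, (f i).natDegree ≤ n i) :
    (∏ i ∈ s, f i).coeff (∑ i ∈ s, n i) = ∏ i ∈ s, (f i).coeff (n i) := by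
  induction s using Finset.cons_induction with
  | empty => simp
  | cons i s hi ih =>
    rw [Finset.forall_mem_cons] at hf
    rw [Finset.prod_cons, Finset.sum_cons, Finset.prod_cons, ← ih hf.2]
    exact coeff_mul_add_eq_of_natDegree_le hf.1
      ((natDegree_prod_le s f).trans (Finset.sum_le_sum hf.2))

/-- The restriction `p(w + T v)` of a polynomial `p` to the line through `w` with direction `v`, as
a polynomial in `T`. The coordinates of `w` may lie in any algebra over the coefficients. -/
noncomputable def alongLine [CommSemiring R] [CommSemiring S] [Algebra R S] (w : σ → S)
    (v : σ → R) : MvPolynomial σ R →ₐ[R] S[X] :=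
  MvPolynomial.aeval fun i => C (w i) + C (algebraMap R S (v i)) * X

section AlongLine

variable [CommSemiring R] [CommSemiring S] [Algebra R S] (w : σ → S) (v : σ → R)
  (p : MvPolynomial σ R)

lemma eval_alongLine (t : R) :
    (alongLine w v p).eval (algebraMap R S t) =
      MvPolynomial.aeval (fun i => w i + algebraMap R S (v i * t)) p := by
  rw [alongLine, ← coe_evalRingHom, MvPolynomial.map_aeval, MvPolynomial.aeval_eq_eval₂Hom]
  congr
  · ext r
    simp [Polynomial.algebraMap_apply]
  · simp

lemma alongLine_eq_sum : alongLine w v p = ∑ e ∈ p.support, C (algebraMap R S (p.coeff e)) *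
    ∏ i ∈ e.support, (C (w i) + C (algebraMap R S (v i)) * X) ^ e i := by
  rw [alongLine, MvPolynomial.aeval_def, MvPolynomial.eval₂_eq]
  rfl

lemma natDegree_prod_line_le (e : σ →₀ ℕ) :
    (∏ i ∈ e.support, (C (w i) + C (algebraMap R S (v i)) * X) ^ e i).natDegree ≤ e.degree :=
  (natDegree_prod_le _ _).trans <| Finset.sum_le_sum fun i _ => by compute_degree

lemma coeff_degree_prod_line (e : σ →₀ ℕ) :
    (∏ i ∈ e.support, (C (w i) + C (algebraMap R S (v i)) * X) ^ e i).coeff e.degree =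
      algebraMap R S (∏ i ∈ e.support, v i ^ e i) := by
  rw [Finsupp.degree_apply, coeff_prod_sum_of_natDegree_le _ fun i _ => by compute_degree, map_prod]
  refine Finset.prod_congr rfl fun i _ => ?_
  have hlin : (C (w i) + C (algebraMap R S (v i)) * X).natDegree ≤ 1 := by compute_degree
  simpa using coeff_pow_of_natDegree_le (m := e i) hlin

variable {p} {d : ℕ}

lemma natDegree_alongLine_le (hp : p.totalDegree ≤ d) : (alongLine w v p).natDegree ≤ d := by
  rw [alongLine_eq_sum]
  refine natDegree_sum_le_of_forall_le _ _ fun e he => (natDegree_C_mul_le _ _).trans ?_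
  exact (natDegree_prod_line_le w v e).trans ((MvPolynomial.le_totalDegree he).trans hp)

lemma coeff_alongLine (hp : p.totalDegree ≤ d) :
    (alongLine w v p).coeff d =
      algebraMap R S (MvPolynomial.eval v (MvPolynomial.homogeneousComponent d p)) := by
  rw [alongLine_eq_sum, finsetSum_coeff, MvPolynomial.homogeneousComponent_apply, map_sum, map_sum,
    Finset.sum_filter]
  refine Finset.sum_congr rfl fun e he => ?_
  rw [coeff_C_mul]
  split_ifs with hed
  · rw [← hed, coeff_degree_prod_line, MvPolynomial.eval_monomial, Finsupp.prod, map_mul]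
  · have hlt : e.degree < d := ((MvPolynomial.le_totalDegree he).trans hp).lt_of_ne hed
    rw [coeff_eq_zero_of_natDegree_lt ((natDegree_prod_line_le w v e).trans_lt hlt), mul_zero]

end AlongLine

/-- The polynomial over `R` obtained by applying the linear functional `φ` to each coefficient.
For `S = R[X]` and a Gaussian integral `φ` this integrates out the inner variable. -/
noncomputable def mapCoeff [CommSemiring R] [Semiring S] [Algebra R S] (φ : S →ₗ[R] R)
    (p : S[X]) : R[X] :=
  p.sum fun n s => monomial n (φ s)

section MapCoeff

variable [CommSemiring R] [Semiring S] [Algebra R S] (φ : S →ₗ[R] R) (p : S[X])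

lemma coeff_mapCoeff (n : ℕ) : (mapCoeff φ p).coeff n = φ (p.coeff n) := by
  rw [mapCoeff, Polynomial.sum, finsetSum_coeff]
  simp +contextual [coeff_monomial]

lemma eval_mapCoeff (r : R) : (mapCoeff φ p).eval r = φ (p.eval (algebraMap R S r)) := by
  rw [mapCoeff, Polynomial.sum, eval_finsetSum, eval_eq_sum, Polynomial.sum, map_sum]
  refine Finset.sum_congr rfl fun n _ => ?_
  rw [eval_monomial, ← map_pow, ← Algebra.commutes, ← Algebra.smul_def, map_smul, smul_eq_mul,
    mul_comm]

lemma mapCoeff_one : mapCoeff φ 1 = C (φ 1) := by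
  rw [mapCoeff, ← C_1, sum_C_index (by simp), monomial_zero_left]

end MapCoeff

lemma coeff_mapCoeff_alongLine_mul [CommSemiring R] [CommSemiring S] [Algebra R S]
    (φ : S →ₗ[R] R) (w w' : σ → S) (v v' : σ → R) {p q : MvPolynomial σ R} {d e : ℕ}
    (hp : p.totalDegree ≤ d) (hq : q.totalDegree ≤ e) :
    (mapCoeff φ (alongLine w v p * alongLine w' v' q)).coeff (d + e) =
      MvPolynomial.eval v (MvPolynomial.homogeneousComponent d p) *
        MvPolynomial.eval v' (MvPolynomial.homogeneousComponent e q) * φ 1 := by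
  rw [coeff_mapCoeff, coeff_mul_add_eq_of_natDegree_le (natDegree_alongLine_le _ _ hp)
    (natDegree_alongLine_le _ _ hq), coeff_alongLine _ _ hp, coeff_alongLine _ _ hq, ← map_mul,
    Algebra.algebraMap_eq_smul_one, map_smul, smul_eq_mul]

lemma homogeneousComponent_totalDegree_ne_zero [CommSemiring R] {p : MvPolynomial σ R}
    (hp : p ≠ 0) : MvPolynomial.homogeneousComponent p.totalDegree p ≠ 0 := by
  obtain ⟨e, he, hmax⟩ := p.support.exists_mem_eq_sup (MvPolynomial.support_nonempty.2 hp)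
    fun e => e.sum fun _ n => n
  have hdeg : e.degree = p.totalDegree := hmax.symm
  refine MvPolynomial.ne_zero_iff.2 ⟨e, ?_⟩
  rwa [MvPolynomial.coeff_homogeneousComponent, if_pos hdeg, ← MvPolynomial.mem_support_iff]

lemma homogeneousComponent_map [CommSemiring R] [CommSemiring S] (f : R →+* S) (n : ℕ)
    (p : MvPolynomial σ R) :
    MvPolynomial.homogeneousComponent n (MvPolynomial.map f p) =
      MvPolynomial.map f (MvPolynomial.homogeneousComponent n p) := by
  ext e
  simp only [MvPolynomial.coeff_homogeneousComponent, MvPolynomial.coeff_map, apply_ite f, map_zero]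

lemma totalDegree_map_le [CommSemiring R] [CommSemiring S] (f : R →+* S)
    (p : MvPolynomial σ R) : (MvPolynomial.map f p).totalDegree ≤ p.totalDegree :=
  Finset.sup_mono (MvPolynomial.support_map_subset f p)

lemma eval_bind₁ [CommSemiring R] (L : σ → MvPolynomial τ R) (p : MvPolynomial σ R) (x : τ → R) :
    MvPolynomial.eval x (MvPolynomial.bind₁ L p) =
      MvPolynomial.eval (fun i => MvPolynomial.eval x (L i)) p :=
  MvPolynomial.aeval_bind₁ x L p

lemma bind₁_injective_of_surjective [CommRing R] [IsDomain R] [Infinite R]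
    {L : σ → MvPolynomial τ R}
    (hL : Function.Surjective fun (x : τ → R) i => MvPolynomial.eval x (L i)) :
    Function.Injective (MvPolynomial.bind₁ L) := by
  refine fun p q hpq => MvPolynomial.funext fun y => ?_
  obtain ⟨x, rfl⟩ := hL y
  rw [← eval_bind₁, hpq, eval_bind₁]

end Polynomials

lemma eq_of_eval_ofReal {p q : ℂ[X]} (h : ∀ t : ℝ, p.eval (t : ℂ) = q.eval (t : ℂ)) : p = q := by
  refine eq_of_infinite_eval_eq p q <|
    (Set.infinite_range_of_injective Complex.ofReal_injective).mono ?_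
  rintro _ ⟨t, rfl⟩
  exact h t

/-- The restriction `p(U - κ T, T + r)` of a polynomial in two variables to sheared coordinates, as
a polynomial in `T` whose coefficients are polynomials in `U`. -/
noncomputable def shearedSlice (κ r : ℂ) (p : MvPolynomial (Fin 2) ℂ) : ℂ[X][X] :=
  alongLine ![X, C r] ![-κ, 1] p

lemma shearedSlice_one (κ r : ℂ) : shearedSlice κ r 1 = 1 :=
  map_one _

lemma evalEval_shearedSlice (κ r u t : ℂ) (p : MvPolynomial (Fin 2) ℂ) :
    (shearedSlice κ r p).evalEval u t = MvPolynomial.eval ![u - κ * t, t + r] p := by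
  rw [evalEval, shearedSlice, ← algebraMap_eq, eval_alongLine, ← coe_evalRingHom,
    MvPolynomial.map_aeval, MvPolynomial.eval]
  congr
  · ext
    simp
  · ext i
    fin_cases i <;> simp [sub_eq_add_neg, add_comm]

lemma eval_alongLine_eq_eval_shearedSlice (κ y s t : ℂ) (p : MvPolynomial (Fin 2) ℂ) :
    (alongLine ![X, 0] ![-κ * y, s] p).eval (C t) =
      (shearedSlice κ ((s - y) * t) p).eval (C (y * t)) := by
  rw [shearedSlice, ← algebraMap_eq, eval_alongLine, eval_alongLine]
  congr
  ext1 i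
  fin_cases i
  · simp [mul_assoc]
  · simp [sub_mul]

section LeadingForms

variable {φ : ℂ[X] →ₗ[ℂ] ℂ} {κ c : ℂ} {p q : MvPolynomial (Fin 2) ℂ}

/-- The functional is constant on the plane of all pairs `(t + a / 2, t - a / 2)`, hence along every
line through the origin of that plane. -/
lemma mapCoeff_alongLine_mul_eq_C
    (h : ∀ a : ℝ, mapCoeff φ (shearedSlice κ (a / 2 : ℝ) p * shearedSlice κ (-(a / 2) : ℝ) q) = C c)
    (x y : ℝ) :
    mapCoeff φ (alongLine ![X, 0] ![-κ * ((x + y) / 2), x] p *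
      alongLine ![X, 0] ![-κ * ((x + y) / 2), y] q) = C c := by
  refine eq_of_eval_ofReal fun t => ?_
  have hx : ((x - (x + y) / 2) * t : ℂ) = ((x - y) * t / 2 : ℝ) := by push_cast; ring
  have hy : ((y - (x + y) / 2) * t : ℂ) = (-((x - y) * t / 2) : ℝ) := by push_cast; ring
  rw [eval_mapCoeff, algebraMap_eq, eval_mul, eval_alongLine_eq_eval_shearedSlice,
    eval_alongLine_eq_eval_shearedSlice, hx, hy, ← eval_mul, ← algebraMap_eq, ← eval_mapCoeff, h,
    eval_C, algebraMap_eq, eval_C]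

lemma eval_homogeneousComponent_mul_eq_zero (hφ : φ 1 ≠ 0) {d : ℕ} (hd : 0 < d)
    (hp : p.totalDegree ≤ d) (hq : q.totalDegree ≤ d)
    (h : ∀ a : ℝ, mapCoeff φ (shearedSlice κ (a / 2 : ℝ) p * shearedSlice κ (-(a / 2) : ℝ) q) = C c)
    (x y : ℝ) :
    MvPolynomial.eval ![-κ * ((x + y) / 2), x] (MvPolynomial.homogeneousComponent d p) *
      MvPolynomial.eval ![-κ * ((x + y) / 2), y] (MvPolynomial.homogeneousComponent d q) = 0 := by
  have htop := coeff_mapCoeff_alongLine_mul φ ![X, 0] ![X, 0]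
    ![-κ * ((x + y) / 2), x] ![-κ * ((x + y) / 2), y] hp hq
  rw [mapCoeff_alongLine_mul_eq_C h, coeff_C_of_ne_zero (by lia)] at htop
  exact (mul_eq_zero.1 htop.symm).resolve_right hφ

lemma homogeneousComponent_eq_zero_or_eq_zero (hκ : κ ≠ 0) (hφ : φ 1 ≠ 0) {d : ℕ} (hd : 0 < d)
    (hp : p.totalDegree ≤ d) (hq : q.totalDegree ≤ d)
    (h : ∀ a : ℝ,
      mapCoeff φ (shearedSlice κ (a / 2 : ℝ) p * shearedSlice κ (-(a / 2) : ℝ) q) = C c) :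
    MvPolynomial.homogeneousComponent d p = 0 ∨ MvPolynomial.homogeneousComponent d q = 0 := by
  let L (i : Fin 2) : Fin 2 → MvPolynomial (Fin 2) ℂ :=
    ![MvPolynomial.C (-κ / 2) * (MvPolynomial.X 0 + MvPolynomial.X 1), MvPolynomial.X i]
  have eval_L (i : Fin 2) (z : Fin 2 → ℂ) :
      (fun j => MvPolynomial.eval z (L i j)) = ![-κ * ((z 0 + z 1) / 2), z i] := by
    ext j
    fin_cases j
    · simp only [L, Fin.zero_eta, cons_val_zero, map_mul, map_add, MvPolynomial.eval_C,
        MvPolynomial.eval_X]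
      ring
    · simp [L]
  have L_injective (i : Fin 2) : Function.Injective (MvPolynomial.bind₁ (L i)) := by
    refine bind₁_injective_of_surjective fun y =>
      ⟨fun j => if j = i then y 1 else -2 * y 0 / κ - y 1, (eval_L i _).trans ?_⟩
    ext j
    fin_cases i <;> fin_cases j <;>
      simp only [Fin.zero_eta, Fin.mk_one, ↓reduceIte, one_ne_zero, zero_ne_one, cons_val_zero,
        cons_val_one, cons_val_fin_one, add_sub_cancel, sub_add_cancel]
    all_goals field_simp
  have hprod : MvPolynomial.bind₁ (L 0) (MvPolynomial.homogeneousComponent d p) *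
      MvPolynomial.bind₁ (L 1) (MvPolynomial.homogeneousComponent d q) = 0 := by
    refine MvPolynomial.funext_set (fun _ => Set.range Complex.ofReal)
      (fun _ => Set.infinite_range_of_injective Complex.ofReal_injective) fun z hz => ?_
    obtain ⟨x, hx⟩ := hz 0 trivial
    obtain ⟨y, hy⟩ := hz 1 trivial
    rw [map_mul, eval_bind₁, eval_bind₁, eval_L, eval_L, ← hx, ← hy, map_zero]
    exact eval_homogeneousComponent_mul_eq_zero hφ hd hp hq h x y
  simpa only [map_eq_zero_iff _ (L_injective _)] using mul_eq_zero.1 hprod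

end LeadingForms

section GaussianMoments

lemma integrable_pow_mul_gaussian {A : ℝ} (hA : 0 < A) (n : ℕ) :
    Integrable fun u : ℝ => u ^ n * Real.exp (-A * u ^ 2) := by
  simpa only [Real.rpow_natCast] using
    integrable_rpow_mul_exp_neg_mul_sq hA (s := n) (by linarith [n.cast_nonneg (α := ℝ)])

lemma integrable_eval_mul_gaussian {A : ℝ} (hA : 0 < A) (p : ℂ[X]) :
    Integrable fun u : ℝ => p.eval (u : ℂ) * (Real.exp (-A * u ^ 2) : ℂ) := by
  induction p using Polynomial.induction_on' with
  | add p q hp hq =>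
    simp only [eval_add, add_mul]
    exact hp.add hq
  | monomial n c =>
    simpa [mul_assoc] using (integrable_pow_mul_gaussian hA n).ofReal (𝕜 := ℂ).const_mul c

lemma integrable_evalEval_mul_gaussian {A δ : ℝ} (hA : 0 < A) (hδ : 0 < δ) (R : ℂ[X][X]) :
    Integrable fun z : ℝ × ℝ => R.evalEval (z.2 : ℂ) (z.1 : ℂ) *
      (Real.exp (-A * z.2 ^ 2) : ℂ) * (Real.exp (-δ * z.1 ^ 2) : ℂ) := by
  induction R using Polynomial.induction_on' with
  | add R R' hR hR' =>
    simp only [evalEval_add, add_mul]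
    exact hR.add hR'
  | monomial n p =>
    refine ((integrable_eval_mul_gaussian hδ (X ^ n)).mul_prod
      (integrable_eval_mul_gaussian hA p)).congr (ae_of_all _ fun z => ?_)
    simp only [evalEval, eval_monomial, eval_mul, eval_pow, eval_X, eval_C]
    ring

/-- The linear functional integrating a polynomial against the Gaussian weight `exp (-A u ^ 2)`,
not normalized to total mass one. -/
noncomputable def gaussianMoment {A : ℝ} (hA : 0 < A) : ℂ[X] →ₗ[ℂ] ℂ where
  toFun p := ∫ u : ℝ, p.eval (u : ℂ) * (Real.exp (-A * u ^ 2) : ℂ)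
  map_add' p q := by
    simp only [eval_add, add_mul]
    exact integral_add (integrable_eval_mul_gaussian hA p) (integrable_eval_mul_gaussian hA q)
  map_smul' c p := by
    simp only [eval_smul, smul_eq_mul, mul_assoc, integral_const_mul, RingHom.id_apply]

lemma gaussianMoment_one_ne_zero {A : ℝ} (hA : 0 < A) : gaussianMoment hA 1 ≠ 0 := by
  have hmass : gaussianMoment hA 1 = (√(Real.pi / A) : ℂ) := by
    simp only [gaussianMoment, LinearMap.coe_mk, AddHom.coe_mk, eval_one, one_mul,
      integral_complex_ofReal, integral_gaussian]
  rw [hmass]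
  exact_mod_cast (Real.sqrt_pos.2 (div_pos Real.pi_pos hA)).ne'

lemma integrable_exp_mul {α : Type*} [MeasurableSpace α] {μ : Measure α} {f : α → ℂ}
    (hf : Integrable f μ) {θ : α → ℝ} (hθ : Measurable θ) :
    Integrable (fun z => Complex.exp (Complex.I * (θ z : ℂ)) * f z) μ := by
  refine hf.bdd_mul (c := 1) (Measurable.aestronglyMeasurable (by fun_prop)) ?_
  refine ae_of_all _ fun z => ?_
  rw [mul_comm, Complex.norm_exp_ofReal_mul_I]

lemma eq_of_forall_integral_exp_mul_eq {f g : ℝ → ℂ} (hfc : Continuous f) (hgc : Continuous g)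
    (hf : Integrable f) (hg : Integrable g)
    (h : ∀ b : ℝ, ∫ w, Complex.exp (Complex.I * (b * w : ℝ)) * f w =
      ∫ w, Complex.exp (Complex.I * (b * w : ℝ)) * g w) : f = g := by
  have hfourier : 𝓕 (f - g) = 0 := by
    ext v
    calc 𝓕 (f - g) v
        = ∫ w, (Complex.exp (Complex.I * (-2 * Real.pi * v * w : ℝ)) * f w -
            Complex.exp (Complex.I * (-2 * Real.pi * v * w : ℝ)) * g w) := by
          rw [Real.fourier_real_eq_integral_exp_smul]
          congr! 2 with w
          rw [Pi.sub_apply, smul_eq_mul, mul_sub, mul_comm Complex.I, mul_right_comm (-2 * Real.pi)]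
      _ = 0 := by
          rw [integral_sub (integrable_exp_mul hf (by fun_prop))
            (integrable_exp_mul hg (by fun_prop)), h, sub_self]
  have hinv := (hfc.sub hgc).fourierInv_fourier_eq (hf.sub hg)
    (by rw [hfourier]; exact integrable_zero _ _ _)
  rw [← sub_eq_zero, ← hinv, hfourier]
  ext v
  simp [Real.fourierInv_eq]

/-- The Fourier transform in `w` at the frequency `b`, integrated over `u`, of the function
`R(u, w) exp (-A u ^ 2 - δ w ^ 2)`. The integration variable is `z = (w, u)`. -/
noncomputable def gaussianFourier (A δ : ℝ) (R : ℂ[X][X]) (b : ℝ) : ℂ :=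
  ∫ z : ℝ × ℝ, Complex.exp (Complex.I * (b * z.1 : ℝ)) *
    (R.evalEval (z.2 : ℂ) (z.1 : ℂ) * (Real.exp (-A * z.2 ^ 2) : ℂ) *
      (Real.exp (-δ * z.1 ^ 2) : ℂ))

variable {A δ : ℝ} (hA : 0 < A) (hδ : 0 < δ)
include hδ

lemma gaussianFourier_eq_integral_mapCoeff (R : ℂ[X][X]) (b : ℝ) :
    gaussianFourier A δ R b = ∫ w : ℝ, Complex.exp (Complex.I * (b * w : ℝ)) *
      ((mapCoeff (gaussianMoment hA) R).eval (w : ℂ) * (Real.exp (-δ * w ^ 2) : ℂ)) := by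
  have hint := integrable_exp_mul (integrable_evalEval_mul_gaussian hA hδ R)
    (θ := fun z => b * z.1) (by fun_prop)
  rw [gaussianFourier, Measure.volume_eq_prod, integral_prod _ hint]
  congr! 2 with w
  dsimp only
  rw [integral_const_mul, integral_mul_const, eval_mapCoeff]
  rfl

lemma mapCoeff_gaussianMoment_eq_of_gaussianFourier_eq {R R' : ℂ[X][X]}
    (h : gaussianFourier A δ R = gaussianFourier A δ R') :
    mapCoeff (gaussianMoment hA) R = mapCoeff (gaussianMoment hA) R' := by
  have hmarginal := eq_of_forall_integral_exp_mul_eq (by fun_prop) (by fun_prop)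
    (integrable_eval_mul_gaussian hδ (mapCoeff (gaussianMoment hA) R))
    (integrable_eval_mul_gaussian hδ (mapCoeff (gaussianMoment hA) R')) fun b => by
      simpa only [gaussianFourier_eq_integral_mapCoeff hA hδ] using congrFun h b
  refine eq_of_eval_ofReal fun w => mul_right_cancel₀ ?_ (congrFun hmarginal w)
  exact_mod_cast (Real.exp_pos _).ne'

end GaussianMoments

section Vacuum

lemma integral_shear_fin_two (κ r : ℝ) {f : (Fin 2 → ℝ) → ℂ} (hf : Continuous f) :
    ∫ x, f x = ∫ z : ℝ × ℝ, f ![z.2 - κ * z.1, z.1 + r] := by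
  have hshear : MeasurePreserving (fun z : ℝ × ℝ => (z.1 + r, z.2 - κ * z.1)) :=
    (measurePreserving_add_right volume r).skew_product
      (g := fun w u => u - κ * w) (by fun_prop)
      (ae_of_all _ fun w => (measurePreserving_sub_right volume (κ * w)).map_eq)
  have hplane : MeasurePreserving (fun z : ℝ × ℝ => ![z.2 - κ * z.1, z.1 + r]) :=
    ((volume_preserving_finTwoArrow ℝ).symm.comp Measure.measurePreserving_swap).comp hshear
  rw [← hplane.map_eq, integral_map hplane.measurable.aemeasurable hf.aestronglyMeasurable]

/-- The unnormalized ground state of the oscillators with frequency matrix `Ω`. -/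
noncomputable def vacuum {n : Type*} [Fintype n] (Ω : Matrix n n ℝ) (x : n → ℝ) : ℝ :=
  Real.exp (-(x ⬝ᵥ (Ω *ᵥ x)) / 2)

lemma continuous_vacuum {n : Type*} [Fintype n] (Ω : Matrix n n ℝ) : Continuous (vacuum Ω) := by
  unfold vacuum
  fun_prop

variable {Ω : Matrix (Fin 2) (Fin 2) ℝ}

/-- In the midpoint coordinate `w` of the two displaced arguments, completing the square in the
first coordinate decouples `u` from `w`. -/
lemma vacuum_mul_vacuum_shear (hsymm : Ω.IsSymm) (h00 : Ω 0 0 ≠ 0) (u w a : ℝ) :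
    vacuum Ω ![u - Ω 0 1 / Ω 0 0 * w, w + a / 2] * vacuum Ω ![u - Ω 0 1 / Ω 0 0 * w, w + -(a / 2)] =
      Real.exp (-Ω 0 0 * u ^ 2) * Real.exp (-(Ω.det / Ω 0 0) * w ^ 2) *
        Real.exp (-Ω 1 1 * a ^ 2 / 4) := by
  simp only [vacuum, ← Real.exp_add]
  congr 1
  simp only [det_fin_two, dotProduct, mulVec, Fin.sum_univ_two, hsymm.apply 0 1, cons_val_zero,
    cons_val_one]
  field_simp
  ring

/-- The state with finitely many quanta obtained by multiplying the ground state by `p`. -/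
noncomputable def polynomialState {n : Type*} [Fintype n] (Ω : Matrix n n ℝ) (p : MvPolynomial n ℂ)
    (x : n → ℝ) : ℂ :=
  MvPolynomial.eval (fun i => (x i : ℂ)) p * (vacuum Ω x : ℂ)

lemma continuous_polynomialState {n : Type*} [Fintype n] (Ω : Matrix n n ℝ)
    (p : MvPolynomial n ℂ) : Continuous (polynomialState Ω p) :=
  ((MvPolynomial.continuous_eval p).comp (by fun_prop)).mul
    (Complex.continuous_ofReal.comp (continuous_vacuum Ω))

lemma conj_polynomialState {n : Type*} [Fintype n] (Ω : Matrix n n ℝ) (p : MvPolynomial n ℂ)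
    (x : n → ℝ) : starRingEnd ℂ (polynomialState Ω p x) =
      polynomialState Ω (MvPolynomial.map (starRingEnd ℂ) p) x := by
  rw [polynomialState, polynomialState, map_mul, Complex.conj_ofReal, MvPolynomial.eval_map,
    MvPolynomial.eval₂_comp]
  simp [Function.comp_def]

lemma polynomialState_one {n : Type*} [Fintype n] (Ω : Matrix n n ℝ) :
    polynomialState Ω 1 = fun x => (vacuum Ω x : ℂ) := by
  ext x
  rw [polynomialState, map_one, one_mul]

lemma polynomialState_shear (κ r u w : ℝ) (p : MvPolynomial (Fin 2) ℂ) :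
    polynomialState Ω p ![u - κ * w, w + r] =
      (shearedSlice κ r p).evalEval (u : ℂ) (w : ℂ) * (vacuum Ω ![u - κ * w, w + r] : ℂ) := by
  rw [polynomialState, evalEval_shearedSlice]
  congr
  ext i
  fin_cases i <;> simp

/-- The integral of `f * W g`, where `W` is the Weyl operator of the phase-space point
`((0, a), (0, b))` on the second oscillator. It is bilinear: a matrix element of `W` is obtained by
conjugating `f`. -/
noncomputable def weylPairing (f g : (Fin 2 → ℝ) → ℂ) (a b : ℝ) : ℂ :=
  ∫ x, f x * Complex.exp (Complex.I * ((b * x 1 - a * b / 2 : ℝ) : ℂ)) *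
    g (x - a • (Pi.single 1 1 : Fin 2 → ℝ))

lemma weylPairing_polynomialState (hsymm : Ω.IsSymm) (h00 : Ω 0 0 ≠ 0)
    (p q : MvPolynomial (Fin 2) ℂ) (a b : ℝ) :
    weylPairing (polynomialState Ω p) (polynomialState Ω q) a b =
      gaussianFourier (Ω 0 0) (Ω.det / Ω 0 0)
        (shearedSlice (Ω 0 1 / Ω 0 0 : ℝ) (a / 2 : ℝ) p *
          shearedSlice (Ω 0 1 / Ω 0 0 : ℝ) (-(a / 2) : ℝ) q) b *
        (Real.exp (-Ω 1 1 * a ^ 2 / 4) : ℂ) := by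
  have hp := continuous_polynomialState Ω p
  have hq := continuous_polynomialState Ω q
  rw [weylPairing, integral_shear_fin_two (Ω 0 1 / Ω 0 0) (a / 2) (by fun_prop),
    gaussianFourier, ← integral_mul_const]
  refine integral_congr_ae (ae_of_all _ fun ⟨w, u⟩ => ?_)
  have hshift : ![u - Ω 0 1 / Ω 0 0 * w, w + a / 2] - a • (Pi.single 1 1 : Fin 2 → ℝ) =
      ![u - Ω 0 1 / Ω 0 0 * w, w + -(a / 2)] := by
    ext i
    fin_cases i
    · simp
    · simp only [Fin.mk_one, Pi.sub_apply, cons_val_one, cons_val_fin_one, Pi.smul_apply,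
        Pi.single_eq_same, smul_eq_mul, mul_one]
      ring
  have hphase : b * (w + a / 2) - a * b / 2 = b * w := by ring
  have hgauss := congrArg Complex.ofReal (vacuum_mul_vacuum_shear hsymm h00 u w a)
  simp only [Complex.ofReal_mul] at hgauss
  dsimp only
  rw [hshift, polynomialState_shear, polynomialState_shear, evalEval_mul, cons_val_one,
    cons_val_fin_one, hphase, mul_right_comm, mul_mul_mul_comm, hgauss]
  ring

lemma mapCoeff_shearedSlice_eq_C (hsymm : Ω.IsSymm) (hA : 0 < Ω 0 0) (hdet : 0 < Ω.det)
    (p q : MvPolynomial (Fin 2) ℂ) (a : ℝ)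
    (h : ∀ b : ℝ, weylPairing (polynomialState Ω p) (polynomialState Ω q) a b =
      weylPairing (fun x => (vacuum Ω x : ℂ)) (fun x => (vacuum Ω x : ℂ)) a b) :
    mapCoeff (gaussianMoment hA)
        (shearedSlice (Ω 0 1 / Ω 0 0 : ℝ) (a / 2 : ℝ) p *
          shearedSlice (Ω 0 1 / Ω 0 0 : ℝ) (-(a / 2) : ℝ) q) =
      C (gaussianMoment hA 1) := by
  rw [← mapCoeff_one]
  refine mapCoeff_gaussianMoment_eq_of_gaussianFourier_eq hA (div_pos hdet hA) (funext fun b => ?_)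
  have hb := h b
  rw [← polynomialState_one, weylPairing_polynomialState hsymm hA.ne',
    weylPairing_polynomialState hsymm hA.ne', shearedSlice_one, shearedSlice_one, mul_one] at hb
  exact mul_right_cancel₀ (by exact_mod_cast (Real.exp_pos _).ne') hb

end Vacuum

/-- Two-oscillator version of Knight's theorem: if the two oscillators are coupled
(`Ω₁₂ ≠ 0`), and a finite-quanta state `ψ = P·ψ₀` (a polynomial times the Gaussian
ground state `ψ₀(x) = exp(−x·Ωx/2)`) has the same expectation as `ψ₀` on every
Weyl operator supported on the second oscillator, then `P` is constant, i.e. `ψ`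
is a multiple of the vacuum. -/
theorem two_oscillators_no_local_finite_quanta_state
    (Ω : Matrix (Fin 2) (Fin 2) ℝ) (hΩsymm : Ω.IsSymm) (hΩpos : Ω.PosDef)
    (hcoupled : Ω 0 1 ≠ 0)
    (ψ₀ : (Fin 2 → ℝ) → ℝ)
    (hψ₀ : ∀ x, ψ₀ x = Real.exp (-(x ⬝ᵥ (Ω *ᵥ x)) / 2))
    (P : MvPolynomial (Fin 2) ℂ)
    (ψ : (Fin 2 → ℝ) → ℂ)
    (hψ : ∀ x, ψ x = MvPolynomial.eval (fun i => (x i : ℂ)) P * (ψ₀ x : ℂ))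
    (hlocal : ∀ a b : ℝ,
      (∫ x : Fin 2 → ℝ,
          (starRingEnd ℂ) (ψ x)
            * Complex.exp (Complex.I * ((b * x 1 - a * b / 2 : ℝ) : ℂ))
            * ψ (x - a • (Pi.single 1 1 : Fin 2 → ℝ)))
        = ∫ x : Fin 2 → ℝ,
            (ψ₀ x : ℂ)
              * Complex.exp (Complex.I * ((b * x 1 - a * b / 2 : ℝ) : ℂ))
              * (ψ₀ (x - a • (Pi.single 1 1 : Fin 2 → ℝ)) : ℂ)) :
    ∃ c : ℂ, P = MvPolynomial.C c := by
  obtain rfl : ψ₀ = vacuum Ω := funext hψ₀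
  obtain rfl : ψ = polynomialState Ω P := funext hψ
  have hA : 0 < Ω 0 0 := hΩpos.diag_pos
  have hκ : ((Ω 0 1 / Ω 0 0 : ℝ) : ℂ) ≠ 0 := Complex.ofReal_ne_zero.2 (div_ne_zero hcoupled hA.ne')
  let Q := MvPolynomial.map (starRingEnd ℂ) P
  have hcorr (a : ℝ) := mapCoeff_shearedSlice_eq_C hΩsymm hA hΩpos.det_pos Q P a fun b => by
    simpa only [weylPairing, conj_polynomialState] using hlocal a b
  by_contra! hP
  have hdeg : 0 < P.totalDegree :=
    Nat.pos_of_ne_zero fun h => hP _ (MvPolynomial.totalDegree_eq_zero_iff_eq_C.1 h)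
  have htop : MvPolynomial.homogeneousComponent P.totalDegree P ≠ 0 :=
    homogeneousComponent_totalDegree_ne_zero fun h => hP 0 (by rw [h, map_zero])
  have htop_conj : MvPolynomial.homogeneousComponent P.totalDegree Q ≠ 0 := by
    rw [homogeneousComponent_map]
    exact (map_ne_zero_iff _ (MvPolynomial.map_injective _ (starRingEnd ℂ).injective)).2 htop
  exact (homogeneousComponent_eq_zero_or_eq_zero hκ (gaussianMoment_one_ne_zero hA) hdeg
    (totalDegree_map_le _ P) le_rfl hcorr).elim htop_conj htop
end

section
/- Let d ≥ 1 be an integer and m > 0. Suppose h : ℝ^d → ℂ and g : ℝ^d → ℂ are Lebesgue-integrable functions each of which vanishes outside some compact subset of ℝ^d, and suppose that their Fourier transforms satisfy, for every k ∈ ℝ^d, 𝓕g(k) = √(‖k‖² + m²) · 𝓕h(k). Then h = 0 almost everywhere. (In other words, the operator with Fourier multiplier √(‖k‖² + m²) — the square root Ω of −Δ (up to normalization) plus m² — is strongly non-local: no nonzero h can have both h and Ωh compactly supported.) -/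
open MeasureTheory FourierTransform

open Filter Set
open scoped RealInnerProductSpace Topology

/-!
Restricted to a line `ℝ e` with `‖e‖ = 1`, the Fourier transforms of `h` and `g` extend to entire
functions `H` and `G` (Paley–Wiener), and `G t = √(t² + m²) H t` for real `t`. The curve
`s² = z² + m²` is parametrised by `z = (w - m² / w) / 2`, `s = (w + m² / w) / 2` with `w ≠ 0`, and
`s = √(z² + m²)` for real `w > 0`, so `G z = s H z` for all `w ≠ 0` by the identity theorem. For
real `w < 0`, however, `s = -√(z² + m²)`. Hence `√(z² + m²) H z = -√(z² + m²) H z` there, and `H`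
vanishes on the negative half-line, so identically.
-/

section EntireExtension

variable {E : Type*} [NormedAddCommGroup E] [NormedSpace ℂ E]

lemma differentiable_integral_exp_mul_smul_of_bound {X : Type*} [MeasurableSpace X] {μ : Measure X}
    {c : X → ℂ} {f : X → E} {R : ℝ} (hc : AEStronglyMeasurable c μ) (hcR : ∀ᵐ x ∂μ, ‖c x‖ ≤ R)
    (hf : Integrable f μ) : Differentiable ℂ fun z : ℂ ↦ ∫ x, Complex.exp (z * c x) • f x ∂μ := by
  intro z₀
  have hexp_meas (z : ℂ) : AEStronglyMeasurable (fun x ↦ Complex.exp (z * c x)) μ :=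
    Complex.continuous_exp.comp_aestronglyMeasurable (hc.const_mul z)
  have hexp_le {z : ℂ} (hz : z ∈ Metric.ball z₀ 1) {x : X} (hx : ‖c x‖ ≤ R) :
      ‖Complex.exp (z * c x)‖ ≤ Real.exp ((‖z₀‖ + 1) * R) := by
    have hz_le : ‖z‖ ≤ ‖z₀‖ + 1 := (norm_lt_of_mem_ball hz).le
    calc ‖Complex.exp (z * c x)‖ ≤ Real.exp ‖z * c x‖ := Complex.norm_exp_le_exp_norm _
      _ ≤ Real.exp ((‖z₀‖ + 1) * R) := by rw [norm_mul]; gcongr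
  have hint : Integrable (fun x ↦ Complex.exp (z₀ * c x) • f x) μ :=
    hf.bdd_smul _ (hexp_meas z₀) <| hcR.mono fun x hx ↦ hexp_le (Metric.mem_ball_self one_pos) hx
  have hderiv (x : X) (z : ℂ) : HasDerivAt (fun z ↦ Complex.exp (z * c x) • f x)
      ((Complex.exp (z * c x) * c x) • f x) z :=
    (hasDerivAt_mul_const (c x)).cexp.smul_const (f x)
  refine (hasDerivAt_integral_of_dominated_loc_of_deriv_le
    (bound := fun x ↦ Real.exp ((‖z₀‖ + 1) * R) * R * ‖f x‖)
    (Metric.ball_mem_nhds z₀ one_pos)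
    (.of_forall fun z ↦ (hexp_meas z).smul hf.aestronglyMeasurable) hint
    (((hexp_meas z₀).mul hc).smul hf.aestronglyMeasurable) ?_ (hf.norm.const_mul _)
    (.of_forall fun x z _ ↦ hderiv x z)).2.differentiableAt
  filter_upwards [hcR] with x hx z hz
  rw [norm_smul, norm_mul]
  gcongr
  exact hexp_le hz hx

lemma differentiable_integral_exp_mul_smul_of_hasCompactSupport {X : Type*} [TopologicalSpace X]
    [MeasurableSpace X] [OpensMeasurableSpace X] {μ : Measure X} {c : X → ℂ} {f : X → E}
    (hc : Continuous c) (hf : Integrable f μ) (hfc : HasCompactSupport f) :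
    Differentiable ℂ fun z : ℂ ↦ ∫ x, Complex.exp (z * c x) • f x ∂μ := by
  obtain ⟨R, hR⟩ := hfc.isCompact.exists_bound_of_continuousOn hc.continuousOn
  have hrestrict (z : ℂ) :
      ∫ x in tsupport f, Complex.exp (z * c x) • f x ∂μ = ∫ x, Complex.exp (z * c x) • f x ∂μ :=
    setIntegral_eq_integral_of_forall_compl_eq_zero fun x hx ↦ by
      rw [image_eq_zero_of_notMem_tsupport hx, smul_zero]
  simp only [← hrestrict]
  exact differentiable_integral_exp_mul_smul_of_bound hc.aestronglyMeasurable
    (ae_restrict_of_forall_mem (isClosed_tsupport f).measurableSet hR) hf.restrict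

lemma exists_differentiable_eq_fourier_smul {V : Type*} [NormedAddCommGroup V]
    [InnerProductSpace ℝ V] [FiniteDimensional ℝ V] [MeasurableSpace V] [BorelSpace V] {f : V → E}
    (hf : Integrable f) (hfc : HasCompactSupport f) (e : V) :
    ∃ F : ℂ → E, Differentiable ℂ F ∧ ∀ t : ℝ, F t = 𝓕 f (t • e) := by
  refine ⟨fun z ↦ ∫ x, Complex.exp (z * ((-2 * Real.pi * ⟪x, e⟫ : ℝ) * Complex.I)) • f x,
    differentiable_integral_exp_mul_smul_of_hasCompactSupport (by fun_prop) hf hfc, fun t ↦ ?_⟩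
  rw [Real.fourier_eq']
  refine integral_congr_ae (.of_forall fun x ↦ ?_)
  simp only [real_inner_smul_right]
  congr 2
  push_cast
  ring

end EntireExtension

section SquareRoot

variable {E : Type*} [NormedAddCommGroup E] [NormedSpace ℂ E]

lemma eqOn_of_frequently_ofReal_eq {f g : ℂ → E} {U : Set ℂ} (hf : AnalyticOnNhd ℂ f U)
    (hg : AnalyticOnNhd ℂ g U) (hU : IsPreconnected U) {x : ℝ} (hx : (x : ℂ) ∈ U)
    (hfg : ∃ᶠ t : ℝ in 𝓝[≠] x, f t = g t) : EqOn f g U := by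
  have hcoe : Tendsto (fun t : ℝ ↦ (t : ℂ)) (𝓝[≠] x) (𝓝[≠] (x : ℂ)) :=
    Complex.continuous_ofReal.continuousWithinAt.tendsto_nhdsWithin
      fun _ ht ↦ Complex.ofReal_injective.ne ht
  exact hf.eqOn_of_preconnected_of_frequently_eq hg hU hx (hcoe.frequently hfg)

lemma sqrt_sq_half_sub_sq_div_add_sq (m : ℝ) {w : ℝ} (hw : 0 < w) :
    √(((w - m ^ 2 / w) / 2) ^ 2 + m ^ 2) = (w + m ^ 2 / w) / 2 := by
  have hsq : ((w - m ^ 2 / w) / 2) ^ 2 + m ^ 2 = ((w + m ^ 2 / w) / 2) ^ 2 := by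
    field_simp
    ring
  rw [hsq, Real.sqrt_sq (by positivity)]

lemma sq_div_sub_sqrt_sq_add_sq (m : ℝ) {t : ℝ} (ht : t < 0) :
    m ^ 2 / (t - √(t ^ 2 + m ^ 2)) = -(t + √(t ^ 2 + m ^ 2)) := by
  have hne : t - √(t ^ 2 + m ^ 2) ≠ 0 := (sub_neg.2 (ht.trans_le (Real.sqrt_nonneg _))).ne
  rw [div_eq_iff hne]
  linear_combination -Real.sq_sqrt (by positivity : 0 ≤ t ^ 2 + m ^ 2)

variable [CompleteSpace E] {G H : ℂ → E} {m : ℝ}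

lemma eqOn_smul_of_eq_sqrt_smul (hG : Differentiable ℂ G) (hH : Differentiable ℂ H)
    (hGH : ∀ t : ℝ, G t = (√(t ^ 2 + m ^ 2) : ℂ) • H t) :
    EqOn (fun w : ℂ ↦ G ((w - m ^ 2 / w) / 2))
      (fun w ↦ ((w + m ^ 2 / w) / 2) • H ((w - m ^ 2 / w) / 2)) {0}ᶜ := by
  have hinv : DifferentiableOn ℂ (fun w : ℂ ↦ (m : ℂ) ^ 2 / w) {0}ᶜ :=
    (differentiableOn_const _).div differentiableOn_id fun _ hw ↦ hw
  have hz : DifferentiableOn ℂ (fun w : ℂ ↦ (w - m ^ 2 / w) / 2) {0}ᶜ :=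
    (differentiableOn_id.sub hinv).div_const 2
  have hs : DifferentiableOn ℂ (fun w : ℂ ↦ (w + m ^ 2 / w) / 2) {0}ᶜ :=
    (differentiableOn_id.add hinv).div_const 2
  have hconn : IsPreconnected ({0}ᶜ : Set ℂ) :=
    (isConnected_compl_singleton_of_one_lt_rank (by simp) 0).isPreconnected
  refine eqOn_of_frequently_ofReal_eq (x := 1)
    ((hG.comp_differentiableOn hz).analyticOnNhd isOpen_compl_singleton)
    ((hs.smul (hH.comp_differentiableOn hz)).analyticOnNhd isOpen_compl_singleton) hconn
    (by simp) (Eventually.frequently ?_)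
  filter_upwards [nhdsWithin_le_nhds (Ioi_mem_nhds one_pos)] with w hw
  have h := hGH ((w - m ^ 2 / w) / 2)
  rw [sqrt_sq_half_sub_sq_div_add_sq m hw] at h
  exact_mod_cast h

lemma eq_neg_sqrt_smul_of_eq_sqrt_smul (hG : Differentiable ℂ G) (hH : Differentiable ℂ H)
    (hGH : ∀ t : ℝ, G t = (√(t ^ 2 + m ^ 2) : ℂ) • H t) {t : ℝ} (ht : t < 0) :
    G t = -(√(t ^ 2 + m ^ 2) : ℂ) • H t := by
  set r := √(t ^ 2 + m ^ 2)
  have hr : 0 ≤ r := Real.sqrt_nonneg _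
  have hw : ((t - r : ℝ) : ℂ) ∈ ({0}ᶜ : Set ℂ) := Complex.ofReal_ne_zero.2 (by linarith)
  have hdiv : (m : ℂ) ^ 2 / (t - r : ℝ) = (-(t + r) : ℝ) :=
    mod_cast sq_div_sub_sqrt_sq_add_sq m ht
  have hz : (((t - r : ℝ) : ℂ) - m ^ 2 / (t - r : ℝ)) / 2 = t := by
    rw [hdiv]
    push_cast
    ring
  have hs : (((t - r : ℝ) : ℂ) + m ^ 2 / (t - r : ℝ)) / 2 = -r := by
    rw [hdiv]
    push_cast
    ring
  simpa only [hz, hs] using eqOn_smul_of_eq_sqrt_smul hG hH hGH hw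

lemma eq_zero_of_eq_sqrt_smul (hG : Differentiable ℂ G) (hH : Differentiable ℂ H)
    (hGH : ∀ t : ℝ, G t = (√(t ^ 2 + m ^ 2) : ℂ) • H t) : H = 0 := by
  have hH_neg {t : ℝ} (ht : t < 0) : H t = 0 := by
    have hsqrt : (√(t ^ 2 + m ^ 2) : ℂ) ≠ 0 :=
      Complex.ofReal_ne_zero.2 (Real.sqrt_pos.2 (by have := sq_pos_of_neg ht; positivity)).ne'
    have hself_neg : G t = -G t := by
      conv_rhs => rw [hGH t, ← neg_smul]
      exact eq_neg_sqrt_smul_of_eq_sqrt_smul hG hH hGH ht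
    have : IsAddTorsionFree E := .of_isTorsionFree ℂ E
    have hG_zero : G t = 0 := self_eq_neg.1 hself_neg
    exact (smul_eq_zero.1 ((hGH t).symm.trans hG_zero)).resolve_left hsqrt
  exact funext fun z ↦ eqOn_of_frequently_ofReal_eq (U := univ) (x := -1)
    (fun z _ ↦ hH.analyticAt z) analyticOnNhd_const isPreconnected_univ (mem_univ _)
    (eventually_of_mem (nhdsWithin_le_nhds (Iio_mem_nhds (by norm_num)))
      fun _ ↦ hH_neg).frequently (mem_univ z)

end SquareRoot

section StrongNonlocality

lemma exists_norm_eq_one_norm_smul_eq {W : Type*} [NormedAddCommGroup W] [NormedSpace ℝ W]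
    [Nontrivial W] (v : W) : ∃ e : W, ‖e‖ = 1 ∧ ‖v‖ • e = v := by
  obtain rfl | hv := eq_or_ne v 0
  · obtain ⟨e, he⟩ := exists_norm_eq W zero_le_one
    exact ⟨e, he, by simp⟩
  · exact ⟨NormedSpace.normalize v, NormedSpace.norm_normalize hv,
      NormedSpace.norm_smul_normalize v⟩

variable {V E : Type*} [NormedAddCommGroup V] [InnerProductSpace ℝ V] [FiniteDimensional ℝ V]
  [MeasurableSpace V] [BorelSpace V] [NormedAddCommGroup E] [NormedSpace ℂ E] [CompleteSpace E]

lemma ae_eq_zero_of_fourier_eq_zero {f : V → E} (hf : Integrable f) (hzero : 𝓕 f = 0) :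
    f =ᵐ[volume] 0 := by
  refine ae_eq_zero_of_integral_contDiff_smul_eq_zero hf.locallyIntegrable fun φ hφ hφc ↦ ?_
  have hφc' : HasCompactSupport fun x ↦ (φ x : ℂ) := hφc.comp_left Complex.ofReal_zero
  let ψ : SchwartzMap V ℂ := hφc'.toSchwartzMap (Complex.ofRealCLM.contDiff.comp hφ)
  let χ : SchwartzMap V ℂ := 𝓕⁻ ψ
  calc ∫ x, φ x • f x = ∫ x, ψ x • f x :=
      integral_congr_ae (.of_forall fun x ↦ (Complex.coe_smul (φ x) (f x)).symm)
    _ = ∫ x, (𝓕 χ) x • f x := by rw [FourierTransform.fourier_fourierInv_eq]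
    _ = ∫ k, χ k • 𝓕 f k := by
      simpa using! VectorFourier.integral_fourierIntegral_smul_eq_flip (L := innerₗ V)
        Real.continuous_fourierChar continuous_inner χ.integrable hf
    _ = 0 := by simp [hzero]

theorem sqrt_laplacian_strongly_nonlocal_general [Nontrivial V] (m : ℝ) {h g : V → E}
    (hh : Integrable h) (hg : Integrable g) (hhc : HasCompactSupport h) (hgc : HasCompactSupport g)
    (hfourier : ∀ k : V, 𝓕 g k = (√(‖k‖ ^ 2 + m ^ 2) : ℂ) • 𝓕 h k) : h =ᵐ[volume] 0 := by
  refine ae_eq_zero_of_fourier_eq_zero hh (funext fun k ↦ ?_)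
  obtain ⟨e, he, hk⟩ := exists_norm_eq_one_norm_smul_eq k
  obtain ⟨H, hH, hH_line⟩ := exists_differentiable_eq_fourier_smul hh hhc e
  obtain ⟨G, hG, hG_line⟩ := exists_differentiable_eq_fourier_smul hg hgc e
  have hH_zero : H = 0 := eq_zero_of_eq_sqrt_smul (m := m) hG hH fun t ↦ by
    rw [hG_line, hH_line, hfourier, norm_smul, he, mul_one, Real.norm_eq_abs, sq_abs]
  rw [← hk, ← hH_line, hH_zero, Pi.zero_apply, Pi.zero_apply]

end StrongNonlocality

/-- Strong non-locality of `Ω = √(−Δ + m²)` (Paley–Wiener): if `h` and `g` are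
integrable functions on `ℝ^d`, each vanishing outside a compact set, and their
Fourier transforms satisfy `𝓕g(k) = √(‖k‖² + m²) 𝓕h(k)` for every `k`, then
`h = 0` almost everywhere. -/
theorem sqrt_laplacian_strongly_nonlocal
    (d : ℕ) (hd : 1 ≤ d) (m : ℝ) (hm : 0 < m)
    (h g : EuclideanSpace ℝ (Fin d) → ℂ)
    (hh : Integrable h volume) (hg : Integrable g volume)
    (hhc : ∃ K : Set (EuclideanSpace ℝ (Fin d)), IsCompact K ∧ ∀ x ∉ K, h x = 0)
    (hgc : ∃ K : Set (EuclideanSpace ℝ (Fin d)), IsCompact K ∧ ∀ x ∉ K, g x = 0)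
    (hfourier : ∀ k : EuclideanSpace ℝ (Fin d),
      𝓕 g k = (Real.sqrt (‖k‖^2 + m^2) : ℂ) * 𝓕 h k) :
    h =ᵐ[volume] 0 := by
  have : Nonempty (Fin d) := ⟨⟨0, hd⟩⟩
  exact sqrt_laplacian_strongly_nonlocal_general m hh hg
    (exists_compact_iff_hasCompactSupport.1 hhc) (exists_compact_iff_hasCompactSupport.1 hgc)
    hfourier
end
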